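/- arXiv:2009.09605 — 3 statements merged into one kernel-verified Lean document; each statement's English description precedes it below -/
import Mathlib

section
/- Let G = (V, E) be a d-uniform hypergraph with d ≥ 2, let β be a positive integer, and for a subgraph H ⊆ E define the potential Φ(H) = ((2β − (d−1))/d) · Σ_{v∈V} d_H(v) − Σ_{e∈H} Σ_{u∈e} d_H(u). If e ∈ H satisfies Σ_{v∈e} d_H(v) ≥ β + 1, then Φ(H \ {e}) ≥ Φ(H) + 1. -/
open Finset

/-- The degree of a vertex `v` in a hypergraph (set of hyperedges) `H`. -/
def deg {V : Type*} [DecidableEq V] (H : Finset (Finset V)) (v : V) : ℕ :=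
  (H.filter (fun e => v ∈ e)).card

/-!
Deleting `e` from `H` lowers `∑ v, deg H v` by `#e = d`, hence the first term of the potential by
`2 * β - (d - 1)`. The degree sums over the edges drop in two ways: the summand `∑ v ∈ e, deg H v`
of `e` itself is lost, and every other edge `f` loses `#(f ∩ e)`, for a total of
`∑ v ∈ e, (deg H v - 1)`. The net change of the potential is therefore exactly
`2 * ∑ v ∈ e, deg H v - 2 * β - 1`, which is at least `1` as soon as `∑ v ∈ e, deg H v ≥ β + 1`.
-/

section Degree

variable {V : Type*} [DecidableEq V] {H : Finset (Finset V)} {e : Finset V}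

theorem sum_deg_eq_sum_card_inter (H : Finset (Finset V)) (s : Finset V) :
    ∑ v ∈ s, deg H v = ∑ f ∈ H, #(s ∩ f) := by
  simp only [← filter_mem_eq_inter]
  exact sum_card_bipartiteAbove_eq_sum_card_bipartiteBelow (· ∈ ·)

theorem sum_deg_erase_add_card_inter (he : e ∈ H) (s : Finset V) :
    ∑ v ∈ s, deg (H.erase e) v + #(s ∩ e) = ∑ v ∈ s, deg H v := by
  simp only [sum_deg_eq_sum_card_inter]
  exact sum_erase_add H (fun f => #(s ∩ f)) he

theorem sum_univ_deg_erase_add_card [Fintype V] (he : e ∈ H) :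
    ∑ v, deg (H.erase e) v + #e = ∑ v, deg H v := by
  simpa only [univ_inter] using sum_deg_erase_add_card_inter he univ

theorem sum_self_deg_erase_add_card (he : e ∈ H) :
    ∑ v ∈ e, deg (H.erase e) v + #e = ∑ v ∈ e, deg H v := by
  simpa only [inter_self] using sum_deg_erase_add_card_inter he e

theorem sum_sum_deg_erase_add_two_mul (he : e ∈ H) :
    ∑ f ∈ H.erase e, ∑ v ∈ f, deg (H.erase e) v + 2 * ∑ v ∈ e, deg H v =
      ∑ f ∈ H, ∑ v ∈ f, deg H v + #e := by
  have loss_of_others : ∑ f ∈ H.erase e, ∑ v ∈ f, deg H v =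
      ∑ f ∈ H.erase e, ∑ v ∈ f, deg (H.erase e) v + ∑ v ∈ e, deg (H.erase e) v := by
    simp only [← sum_deg_erase_add_card_inter he, sum_add_distrib,
      sum_deg_eq_sum_card_inter _ e, inter_comm e]
  have loss_of_self := sum_erase_add H (fun f => ∑ v ∈ f, deg H v) he
  have degree_drop := sum_self_deg_erase_add_card he
  linarith

end Degree

section Potential

variable {V K : Type*} [Fintype V] [DecidableEq V] [Field K]
  {H : Finset (Finset V)} {e : Finset V} {d : ℕ}

/-- The potential `Φ(H)` with respect to `β` of a set `H` of hyperedges, which measures progress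
when edges are removed. Uniformity is not built in: `d` is a parameter, and the first term vanishes
when `d = 0` in `K`, by the convention for division by zero. -/
def potential (d : ℕ) (β : K) (H : Finset (Finset V)) : K :=
  (2 * β - ((d : K) - 1)) / d * ∑ v, (deg H v : K) - ∑ f ∈ H, ∑ v ∈ f, (deg H v : K)

theorem potential_erase (hd : (d : K) ≠ 0) (β : K) (he : e ∈ H) (hcard : #e = d) :
    potential d β (H.erase e) =
      potential d β H + (2 * ∑ v ∈ e, (deg H v : K) - 2 * β - 1) := by
  have degree_sum : ∑ v, (deg (H.erase e) v : K) + d = ∑ v, (deg H v : K) := by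
    simpa [hcard] using congrArg (Nat.cast : ℕ → K) (sum_univ_deg_erase_add_card he)
  have edge_sum : ∑ f ∈ H.erase e, ∑ v ∈ f, (deg (H.erase e) v : K) +
      2 * ∑ v ∈ e, (deg H v : K) = ∑ f ∈ H, ∑ v ∈ f, (deg H v : K) + d := by
    simpa [hcard] using congrArg (Nat.cast : ℕ → K) (sum_sum_deg_erase_add_two_mul he)
  rw [potential, potential, ← degree_sum, mul_add, div_mul_cancel₀ _ hd]
  linear_combination -edge_sum

theorem potential_increase_remove_general [LinearOrder K] [IsStrictOrderedRing K]
    (hd : d ≠ 0) (β : K) (he : e ∈ H) (hcard : #e = d)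
    (hbig : β + 1 ≤ ∑ v ∈ e, (deg H v : K)) :
    potential d β H + 1 ≤ potential d β (H.erase e) := by
  rw [potential_erase (Nat.cast_ne_zero.mpr hd) β he hcard]
  linarith

end Potential

/-- If an edge `e ∈ H` violates property (P1), i.e. `∑_{v∈e} d_H(v) ≥ β + 1`,
then removing `e` increases the potential
`Φ(H) = ((2β − (d−1))/d)·∑_v d_H(v) − ∑_{e∈H} ∑_{u∈e} d_H(u)` by at least 1. -/
theorem potential_increase_remove {V : Type*} [Fintype V] [DecidableEq V]
    (d : ℕ) (hd : 2 ≤ d)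
    (E : Finset (Finset V)) (hE : ∀ e ∈ E, e.card = d)
    (β : ℕ) (hβ : 0 < β)
    (Φ : Finset (Finset V) → ℝ)
    (hΦ : ∀ H : Finset (Finset V),
      Φ H = ((2 * (β : ℝ) - ((d : ℝ) - 1)) / d) * (∑ v : V, (deg H v : ℝ))
            - ∑ e ∈ H, ∑ u ∈ e, (deg H u : ℝ))
    (H : Finset (Finset V)) (hH : H ⊆ E)
    (e : Finset V) (he : e ∈ H)
    (hbig : (β : ℝ) + 1 ≤ ∑ v ∈ e, (deg H v : ℝ)) :
    Φ H + 1 ≤ Φ (H.erase e) := by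
  obtain rfl : Φ = potential d (β : ℝ) := funext hΦ
  exact potential_increase_remove_general (by lia) (β : ℝ) he (hE e (hH he)) hbig
end

section
/- Let G = (V, E) be a d-uniform hypergraph on n vertices with d ≥ 2, let α > 2, 0 < λ < 1, and p ∈ (0, 1) with p < 1 − 2/α, and let β be a real number with β ≥ 15d(αd)²·λ^{−2}·log n. Set β_H = (1 − λ/α)·β/p and β_H⁻ = β_H − (d−1), and let H be an HEDCS(G, β_H, β_H⁻). Let G_p be the random subgraph of G in which each edge of E is included independently with probability p, and let H_p = H ∩ G_p. Then with probability at least 1 − 2/n^{5d−1}, simultaneously: (1) for every vertex v ∈ V, |d_{H_p}(v) − p·d_H(v)| ≤ (λ/(αd))·β; and (2) H_p is an HEDCS(G_p, β, (1−λ)β). -/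
open Finset

/-- `IsHEDCS E H β β⁻`: `H ⊆ E`, every edge of `H` has degree-sum at most `β`,
and every edge of `E \ H` has degree-sum at least `β⁻`. -/
def IsHEDCS {V : Type*} [DecidableEq V] (E H : Finset (Finset V)) (β βm : ℝ) : Prop :=
  H ⊆ E ∧ (∀ e ∈ H, (∑ v ∈ e, (deg H v : ℝ)) ≤ β) ∧
    (∀ e ∈ E, e ∉ H → βm ≤ ∑ v ∈ e, (deg H v : ℝ))

/-- The probability, under independent edge sampling with probability `p` from
the edge set `E`, that the sampled edge set lies in the event `A`. -/
noncomputable def sampleProb {V : Type*} [DecidableEq V] (E : Finset (Finset V)) (p : ℝ)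
    (A : Set (Finset (Finset V))) : ℝ :=
  ∑ S ∈ E.powerset, Set.indicator A (fun S => p ^ S.card * (1 - p) ^ (E.card - S.card)) S

/-!
Each degree `deg (H ∩ S) v` is a sum of `deg H v` independent Bernoulli variables whose mean
`p * deg H v` is at most `β`. A Chernoff bound makes it deviate by `t = lam / (α * d) * β` or more
with probability at most `2 * exp (-t ^ 2 / (3 * β)) ≤ 2 / n ^ (5 * d)`, and a union bound over the
`n` vertices gives (1). Statement (2) then holds deterministically: by (1), the degree sum of
`H ∩ S` over an edge is within `d * t = lam / α * β` of `p` times that of `H`. For the upper bound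
this is exactly the slack left by the choice of `β_H`. In the lower bound the remaining loss
`p * (d - 1)` is absorbed by `(1 - 2 / α) * lam * β`.
-/

section SampleWeight

variable {ι : Type*} {E F : Finset ι} {p s : ℝ}

/-- The probability that sampling each element of `E` independently with probability `p` yields
exactly `S`. It is meant for `S ⊆ E`, since `#E - #S` is a truncated subtraction. -/
noncomputable def sampleWeight (E : Finset ι) (p : ℝ) (S : Finset ι) : ℝ :=
  p ^ #S * (1 - p) ^ (#E - #S)

lemma sampleWeight_nonneg (hp0 : 0 ≤ p) (hp1 : p ≤ 1) (S : Finset ι) : 0 ≤ sampleWeight E p S :=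
  mul_nonneg (pow_nonneg hp0 _) (pow_nonneg (sub_nonneg.2 hp1) _)

lemma sum_sampleWeight (E : Finset ι) (p : ℝ) : ∑ S ∈ E.powerset, sampleWeight E p S = 1 := by
  simp only [sampleWeight, sum_pow_mul_eq_add_pow, add_sub_cancel, one_pow]

lemma sum_sampleWeight_mul_prod (E : Finset ι) (p : ℝ) (f : ι → ℝ) :
    ∑ S ∈ E.powerset, sampleWeight E p S * ∏ e ∈ S, f e = ∏ e ∈ E, (p * f e + (1 - p)) := by
  classical
  rw [prod_add]
  refine sum_congr rfl fun S hS => ?_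
  rw [prod_mul_distrib, prod_const, prod_const, card_sdiff_of_subset (mem_powerset.1 hS),
    sampleWeight]
  ring

variable [DecidableEq ι]

lemma sum_sampleWeight_mul_exp_card_inter (hF : F ⊆ E) (p s : ℝ) :
    ∑ S ∈ E.powerset, sampleWeight E p S * Real.exp (s * #(F ∩ S)) =
      (p * Real.exp s + (1 - p)) ^ #F := by
  have hexp (S : Finset ι) :
      Real.exp (s * #(F ∩ S)) = ∏ e ∈ S, if e ∈ F then Real.exp s else 1 := by
    rw [prod_ite_mem, prod_const, inter_comm, mul_comm, Real.exp_nat_mul]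
  have hfactor (e : ι) : p * (if e ∈ F then Real.exp s else 1) + (1 - p) =
      if e ∈ F then p * Real.exp s + (1 - p) else 1 := by
    split_ifs <;> ring
  simp only [hexp, sum_sampleWeight_mul_prod, hfactor]
  rw [prod_ite_mem, inter_eq_right.2 hF, prod_const]

-- The constant `3 / 4` is what turns into the `3` of the Chernoff exponent `t ^ 2 / (3 * μ)`; the
-- coarser `1 + x + x ^ 2` would give `4`, too weak for the factor `15` in the bound on `β`.
lemma exp_le_one_add_add_sq {x : ℝ} (hx : |x| ≤ 1) : Real.exp x ≤ 1 + x + 3 / 4 * x ^ 2 := by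
  have htaylor := (abs_le.1 (Real.exp_bound hx (n := 3) (by norm_num))).2
  norm_num [sum_range_succ, Nat.factorial] at htaylor
  have hcube : |x| ^ 3 ≤ x ^ 2 := by
    rw [← sq_abs]
    exact pow_le_pow_of_le_one (abs_nonneg x) hx (by norm_num)
  linarith [sq_nonneg x]

lemma sum_sampleWeight_mul_exp_centered_le (hF : F ⊆ E) (hp0 : 0 ≤ p) (hp1 : p ≤ 1)
    (hs : |s| ≤ 1) :
    ∑ S ∈ E.powerset, sampleWeight E p S * Real.exp (s * (#(F ∩ S) - p * #F)) ≤
      Real.exp (3 / 4 * s ^ 2 * (p * #F)) := by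
  have hfactor : p * Real.exp s + (1 - p) ≤ Real.exp (p * (s + 3 / 4 * s ^ 2)) := by
    have hquad := mul_le_mul_of_nonneg_left (exp_le_one_add_add_sq hs) hp0
    linarith [Real.add_one_le_exp (p * (s + 3 / 4 * s ^ 2))]
  have hfactor_nonneg : 0 ≤ p * Real.exp s + (1 - p) :=
    add_nonneg (by positivity) (sub_nonneg.2 hp1)
  calc
    _ = (p * Real.exp s + (1 - p)) ^ #F * Real.exp (-(s * (p * #F))) := by
      rw [← sum_sampleWeight_mul_exp_card_inter hF, sum_mul]
      refine sum_congr rfl fun S _ => ?_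
      rw [mul_assoc, ← Real.exp_add, mul_sub, sub_eq_add_neg]
    _ ≤ Real.exp (p * (s + 3 / 4 * s ^ 2)) ^ #F * Real.exp (-(s * (p * #F))) :=
      mul_le_mul_of_nonneg_right (pow_le_pow_left₀ hfactor_nonneg hfactor _) (Real.exp_nonneg _)
    _ = Real.exp (3 / 4 * s ^ 2 * (p * #F)) := by
      rw [← Real.exp_nat_mul, ← Real.exp_add]
      ring_nf

end SampleWeight

section SampleProb

variable {V : Type*} [DecidableEq V] {E F H : Finset (Finset V)} {p t μ : ℝ}
  {A B : Set (Finset (Finset V))}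

lemma sampleProb_eq_sum_indicator (E : Finset (Finset V)) (p : ℝ) (A : Set (Finset (Finset V))) :
    sampleProb E p A = ∑ S ∈ E.powerset, A.indicator (sampleWeight E p) S :=
  rfl

lemma sampleProb_nonneg (hp0 : 0 ≤ p) (hp1 : p ≤ 1) : 0 ≤ sampleProb E p A :=
  sum_nonneg fun S _ => Set.indicator_nonneg (fun S _ => sampleWeight_nonneg hp0 hp1 S) S

lemma sampleProb_mono (hp0 : 0 ≤ p) (hp1 : p ≤ 1) (hAB : ∀ S ⊆ E, S ∈ A → S ∈ B) :
    sampleProb E p A ≤ sampleProb E p B := by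
  simp only [sampleProb_eq_sum_indicator]
  refine sum_le_sum fun S hS => Set.indicator_apply_le' (fun hA => ?_)
    fun _ => Set.indicator_nonneg (fun S _ => sampleWeight_nonneg hp0 hp1 S) S
  rw [Set.indicator_of_mem (hAB S (mem_powerset.1 hS) hA)]

lemma sampleProb_add_sampleProb_compl (E : Finset (Finset V)) (p : ℝ)
    (A : Set (Finset (Finset V))) : sampleProb E p A + sampleProb E p Aᶜ = 1 := by
  simp only [sampleProb_eq_sum_indicator, ← sum_add_distrib, Set.indicator_self_add_compl_apply,
    sum_sampleWeight]

lemma sampleProb_iUnion_le {κ : Type*} [Fintype κ] (hp0 : 0 ≤ p) (hp1 : p ≤ 1)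
    (A : κ → Set (Finset (Finset V))) :
    sampleProb E p (⋃ k, A k) ≤ ∑ k, sampleProb E p (A k) := by
  have hnonneg (S) (k) : 0 ≤ (A k).indicator (sampleWeight E p) S :=
    Set.indicator_nonneg (fun S _ => sampleWeight_nonneg hp0 hp1 S) S
  simp only [sampleProb_eq_sum_indicator]
  rw [sum_comm]
  refine sum_le_sum fun S _ => Set.indicator_apply_le' (fun hS => ?_)
    fun _ => sum_nonneg fun k _ => hnonneg S k
  obtain ⟨k, hk⟩ := Set.mem_iUnion.1 hS
  rw [← Set.indicator_of_mem hk (sampleWeight E p)]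
  exact single_le_sum (fun k _ => hnonneg S k) (mem_univ k)

lemma sampleProb_le_sum_sampleWeight_mul {f : Finset (Finset V) → ℝ} (hp0 : 0 ≤ p) (hp1 : p ≤ 1)
    (hf : ∀ S, 0 ≤ f S) (hfA : ∀ S ∈ A, 1 ≤ f S) :
    sampleProb E p A ≤ ∑ S ∈ E.powerset, sampleWeight E p S * f S := by
  have hw (S) : 0 ≤ sampleWeight E p S := sampleWeight_nonneg hp0 hp1 S
  exact sum_le_sum fun S _ => Set.indicator_apply_le'
    (fun hS => le_mul_of_one_le_right (hw S) (hfA S hS)) fun _ => mul_nonneg (hw S) (hf S)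

lemma one_le_exp_add_exp_of_le_abs {s x : ℝ} (hs : 0 ≤ s) (hx : t ≤ |x|) :
    1 ≤ (Real.exp (s * x) + Real.exp (-s * x)) * Real.exp (-(s * t)) := by
  rw [add_mul, ← Real.exp_add, ← Real.exp_add]
  rcases le_abs.1 hx with h | h
  · have hle : 0 ≤ s * x + -(s * t) := by linarith [mul_le_mul_of_nonneg_left h hs]
    linarith [Real.one_le_exp hle, Real.exp_pos (-s * x + -(s * t))]
  · have hle : 0 ≤ -s * x + -(s * t) := by linarith [mul_le_mul_of_nonneg_left h hs]
    linarith [Real.one_le_exp hle, Real.exp_pos (s * x + -(s * t))]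

lemma sampleProb_le_abs_card_inter_sub_le (hF : F ⊆ E) (hp0 : 0 ≤ p) (hp1 : p ≤ 1)
    (hFμ : p * #F ≤ μ) (hμ : 0 < μ) (ht0 : 0 ≤ t) (htμ : t ≤ 3 / 2 * μ) :
    sampleProb E p {S | t ≤ |(#(F ∩ S) : ℝ) - p * #F|} ≤ 2 * Real.exp (-(t ^ 2 / (3 * μ))) := by
  -- `s` minimises the exponent `3 / 4 * s ^ 2 * μ - s * t` of the exponential Markov bound.
  set s : ℝ := 2 * t / (3 * μ) with hs
  have hs0 : 0 ≤ s := by positivity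
  have hs1 : |s| ≤ 1 := by
    rw [abs_of_nonneg hs0, hs, div_le_one (by positivity)]
    linarith
  have hmgf {r : ℝ} (hr : |r| ≤ 1) (hrs : r ^ 2 = s ^ 2) :
      ∑ S ∈ E.powerset, sampleWeight E p S * Real.exp (r * (#(F ∩ S) - p * #F)) ≤
        Real.exp (3 / 4 * s ^ 2 * μ) := by
    refine (sum_sampleWeight_mul_exp_centered_le hF hp0 hp1 hr).trans ?_
    rw [hrs]
    gcongr
  calc
    _ ≤ ∑ S ∈ E.powerset, sampleWeight E p S *
          ((Real.exp (s * (#(F ∩ S) - p * #F)) + Real.exp (-s * (#(F ∩ S) - p * #F))) *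
            Real.exp (-(s * t))) :=
      sampleProb_le_sum_sampleWeight_mul hp0 hp1 (fun S => by positivity)
        fun S hS => one_le_exp_add_exp_of_le_abs hs0 hS
    _ ≤ (Real.exp (3 / 4 * s ^ 2 * μ) + Real.exp (3 / 4 * s ^ 2 * μ)) * Real.exp (-(s * t)) := by
      simp only [← mul_assoc, ← sum_mul, mul_add, sum_add_distrib]
      gcongr
      · exact hmgf hs1 rfl
      · exact hmgf (by rwa [abs_neg]) (neg_sq s)
    _ = 2 * Real.exp (-(t ^ 2 / (3 * μ))) := by
      rw [← two_mul, mul_assoc, ← Real.exp_add, hs]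
      congr 2
      field_simp
      ring

lemma one_sub_le_sampleProb_abs_deg_inter_sub_le [Fintype V] (hHE : H ⊆ E) (hp0 : 0 ≤ p)
    (hp1 : p ≤ 1) (hdeg : ∀ v, p * deg H v ≤ μ) (hμ : 0 < μ) (ht0 : 0 ≤ t)
    (htμ : t ≤ 3 / 2 * μ) :
    1 - Fintype.card V * (2 * Real.exp (-(t ^ 2 / (3 * μ)))) ≤
      sampleProb E p {S | ∀ v : V, |(deg (H ∩ S) v : ℝ) - p * deg H v| ≤ t} := by
  set good : Set (Finset (Finset V)) := {S | ∀ v : V, |(deg (H ∩ S) v : ℝ) - p * deg H v| ≤ t}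
  have hvertex (v : V) : sampleProb E p {S | t ≤ |(deg (H ∩ S) v : ℝ) - p * deg H v|} ≤
      2 * Real.exp (-(t ^ 2 / (3 * μ))) := by
    simp only [deg, ← filter_inter]
    exact sampleProb_le_abs_card_inter_sub_le ((filter_subset _ _).trans hHE) hp0 hp1 (hdeg v)
      hμ ht0 htμ
  have hbad : sampleProb E p goodᶜ ≤ Fintype.card V * (2 * Real.exp (-(t ^ 2 / (3 * μ)))) :=
    calc
      _ ≤ sampleProb E p (⋃ v, {S | t ≤ |(deg (H ∩ S) v : ℝ) - p * deg H v|}) := by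
        refine sampleProb_mono hp0 hp1 fun S _ hS => ?_
        obtain ⟨v, hv⟩ := not_forall.1 hS
        exact Set.mem_iUnion.2 ⟨v, (not_le.1 hv).le⟩
      _ ≤ ∑ v, sampleProb E p {S | t ≤ |(deg (H ∩ S) v : ℝ) - p * deg H v|} :=
        sampleProb_iUnion_le hp0 hp1 _
      _ ≤ ∑ _v : V, 2 * Real.exp (-(t ^ 2 / (3 * μ))) := sum_le_sum fun v _ => hvertex v
      _ = _ := by rw [sum_const, card_univ, nsmul_eq_mul]
  linarith [sampleProb_add_sampleProb_compl E p good]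

end SampleProb

namespace IsHEDCS

variable {V : Type*} [DecidableEq V] {E H S : Finset (Finset V)} {β β' βm βm' p t : ℝ}

lemma mono (hH : IsHEDCS E H β βm) (hβ : β ≤ β') (hβm : βm' ≤ βm) : IsHEDCS E H β' βm' :=
  ⟨hH.1, fun e he => (hH.2.1 e he).trans hβ, fun e he heH => hβm.trans (hH.2.2 e he heH)⟩

lemma deg_le (hH : IsHEDCS E H β βm) (hβ : 0 ≤ β) (v : V) : (deg H v : ℝ) ≤ β := by
  obtain hempty | ⟨e, he⟩ := (H.filter (v ∈ ·)).eq_empty_or_nonempty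
  · simpa [deg, hempty] using hβ
  · obtain ⟨heH, hve⟩ := mem_filter.1 he
    exact (single_le_sum (f := fun u => (deg H u : ℝ)) (fun _ _ => Nat.cast_nonneg _) hve).trans
      (hH.2.1 e heH)

lemma inter_of_abs_deg_inter_sub_le {d : ℕ} (hH : IsHEDCS E H β βm) (hE : ∀ e ∈ E, #e ≤ d)
    (hSE : S ⊆ E) (hp : 0 ≤ p) (ht : 0 ≤ t)
    (hdev : ∀ v, |(deg (H ∩ S) v : ℝ) - p * deg H v| ≤ t) :
    IsHEDCS S (H ∩ S) (p * β + d * t) (p * βm - d * t) := by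
  have hsum (e) (he : e ∈ E) :
      |∑ v ∈ e, (deg (H ∩ S) v : ℝ) - p * ∑ v ∈ e, (deg H v : ℝ)| ≤ d * t :=
    calc
      _ = |∑ v ∈ e, ((deg (H ∩ S) v : ℝ) - p * deg H v)| := by rw [sum_sub_distrib, mul_sum]
      _ ≤ ∑ v ∈ e, |(deg (H ∩ S) v : ℝ) - p * deg H v| := abs_sum_le_sum_abs _ _
      _ ≤ #e * t := by simpa using sum_le_card_nsmul e _ t fun v _ => hdev v
      _ ≤ d * t := by gcongr; exact hE e he
  refine ⟨inter_subset_right, fun e he => ?_, fun e heS he => ?_⟩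
  · have heH := (mem_inter.1 he).1
    linarith [(abs_le.1 (hsum e (hH.1 heH))).2, mul_le_mul_of_nonneg_left (hH.2.1 e heH) hp]
  · have heH : e ∉ H := fun h => he (mem_inter.2 ⟨h, heS⟩)
    linarith [(abs_le.1 (hsum e (hSE heS))).1,
      mul_le_mul_of_nonneg_left (hH.2.2 e (hSE heS) heH) hp]

end IsHEDCS

section Parameters

variable {α lam β p L : ℝ} {d n : ℕ}

lemma natCast_mul_exp_neg_le {k : ℕ} {x : ℝ} (hn : n ≠ 0) (hk : k ≠ 0)
    (hx : k * Real.log n ≤ x) : n * Real.exp (-x) ≤ 1 / (n : ℝ) ^ (k - 1) := by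
  have hn0 : (0 : ℝ) < n := by positivity
  calc
    n * Real.exp (-x) ≤ n * Real.exp (-(k * Real.log n)) := by gcongr
    _ = n * ((n : ℝ) ^ k)⁻¹ := by rw [Real.exp_neg, Real.exp_nat_mul, Real.exp_log hn0]
    _ = 1 / (n : ℝ) ^ (k - 1) := by
      rw [← mul_pow_sub_one hk (n : ℝ)]
      field_simp

lemma five_mul_le_sq_div (hα : 0 < α) (hlam : 0 < lam) (hd : 0 < d) (hβ0 : 0 < β)
    (hβ : 15 * (d : ℝ) * (α * d) ^ 2 / lam ^ 2 * L ≤ β) :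
    5 * d * L ≤ (lam / (α * d) * β) ^ 2 / (3 * β) :=
  calc
    5 * d * L = (lam / (α * d)) ^ 2 / 3 * (15 * (d : ℝ) * (α * d) ^ 2 / lam ^ 2 * L) := by
      field_simp
      ring
    _ ≤ (lam / (α * d)) ^ 2 / 3 * β := by gcongr
    _ = (lam / (α * d) * β) ^ 2 / (3 * β) := by field_simp

lemma natCast_mul_two_mul_exp_neg_le (hα : 0 < α) (hlam : 0 < lam) (hd : 0 < d) (hn : n ≠ 0)
    (hβ0 : 0 < β) (hβ : 15 * (d : ℝ) * (α * d) ^ 2 / lam ^ 2 * Real.log n ≤ β) :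
    n * (2 * Real.exp (-((lam / (α * d) * β) ^ 2 / (3 * β)))) ≤ 2 / (n : ℝ) ^ (5 * d - 1) := by
  rw [mul_left_comm, ← mul_one_div 2]
  gcongr
  exact natCast_mul_exp_neg_le hn (by lia)
    (by exact_mod_cast five_mul_le_sq_div hα hlam hd hβ0 hβ)

lemma natCast_le_mul_of_log_le (hα : 2 ≤ α) (hlam : 0 < lam) (hlamα : lam ≤ α) (hn : 2 ≤ n)
    (hβ : 15 * (d : ℝ) * (α * d) ^ 2 / lam ^ 2 * Real.log n ≤ β) : (d : ℝ) ≤ lam * β := by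
  obtain rfl | hd := d.eq_zero_or_pos
  · simpa using mul_nonneg hlam.le (le_trans (by positivity) hβ)
  have hd1 : (1 : ℝ) ≤ d := by exact_mod_cast hd
  have hlog : 1 / 2 ≤ Real.log n := by
    have hmono : Real.log 2 ≤ Real.log n := Real.log_le_log two_pos (by exact_mod_cast hn)
    linarith [Real.log_two_gt_d9]
  calc
    (d : ℝ) ≤ 15 * (d : ℝ) * (2 * 1 * 1) * (1 / 2) := by linarith
    _ ≤ 15 * (d : ℝ) * (α * d * d) * Real.log n := by gcongr
    _ = lam * (15 * (d : ℝ) * (α * lam * d ^ 2) / lam ^ 2 * Real.log n) := by field_simp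
    _ ≤ lam * (15 * (d : ℝ) * (α * α * d ^ 2) / lam ^ 2 * Real.log n) := by gcongr
    _ = lam * (15 * (d : ℝ) * (α * d) ^ 2 / lam ^ 2 * Real.log n) := by ring
    _ ≤ lam * β := by gcongr

lemma div_mul_natCast_mul_le (hα : 0 < α) (hlamα : lam ≤ α) (hd : 0 < d) (hβ0 : 0 ≤ β) :
    lam / (α * d) * β ≤ β := by
  have hd1 : (1 : ℝ) ≤ d := by exact_mod_cast hd
  refine mul_le_of_le_one_left hβ0 ((div_le_one (by positivity)).2 ?_)
  exact hlamα.trans (le_mul_of_one_le_right hα.le hd1)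

lemma natCast_mul_div_natCast_mul (hd : 0 < d) : d * (lam / (α * d) * β) = lam / α * β := by
  field_simp

lemma mul_div_add_natCast_mul (hd : 0 < d) (hp0 : 0 < p) :
    p * ((1 - lam / α) * β / p) + d * (lam / (α * d) * β) = β := by
  rw [natCast_mul_div_natCast_mul hd, mul_div_cancel₀ _ hp0.ne']
  ring

lemma one_sub_mul_le_of_natCast_le_mul (hd : 0 < d) (hp0 : 0 < p)
    (hpα : p ≤ 1 - 2 / α) (hdβ : (d : ℝ) ≤ lam * β) :
    (1 - lam) * β ≤
      p * ((1 - lam / α) * β / p - ((d : ℝ) - 1)) - d * (lam / (α * d) * β) := by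
  have hd1 : (1 : ℝ) ≤ d := by exact_mod_cast hd
  have hloss : p * ((d : ℝ) - 1) ≤ (1 - 2 / α) * (lam * β) :=
    mul_le_mul hpα (by linarith) (by linarith) (by linarith)
  have hslack : (1 - 2 / α) * (lam * β) = lam * β - 2 * (lam / α * β) := by ring
  rw [natCast_mul_div_natCast_mul hd, mul_sub, mul_div_cancel₀ _ hp0.ne']
  linarith

end Parameters

theorem hedcs_sampling_robust_general {V : Type*} [Fintype V] [DecidableEq V]
    (d : ℕ) (E : Finset (Finset V)) (hE₀ : ∀ e ∈ E, e.Nonempty) (hE : ∀ e ∈ E, #e ≤ d)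
    (α lam p β : ℝ) (hα : 0 < α) (hlam0 : 0 < lam) (hlamα : lam ≤ α)
    (hp0 : 0 < p) (hpα : p ≤ 1 - 2 / α)
    (hβ : 15 * (d : ℝ) * (α * d) ^ 2 / lam ^ 2 * Real.log (Fintype.card V) ≤ β)
    (H : Finset (Finset V))
    (hH : IsHEDCS E H ((1 - lam / α) * β / p) ((1 - lam / α) * β / p - ((d : ℝ) - 1))) :
    1 - 2 / (Fintype.card V : ℝ) ^ (5 * d - 1) ≤
      sampleProb E p {S |
        (∀ v : V, |((deg (H ∩ S) v : ℝ)) - p * (deg H v : ℝ)| ≤ lam / (α * d) * β) ∧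
        IsHEDCS S (H ∩ S) β ((1 - lam) * β)} := by
  have hβ_nonneg : 0 ≤ β := le_trans (by positivity) hβ
  have hp1 : p ≤ 1 := by linarith [div_pos two_pos hα]
  have hα2 : 2 ≤ α := (div_le_one hα).1 (by linarith)
  set t : ℝ := lam / (α * d) * β
  have ht0 : 0 ≤ t := by positivity
  obtain rfl | ⟨e, he⟩ := E.eq_empty_or_nonempty
  · obtain rfl := subset_empty.1 hH.1
    simpa [sampleProb, deg, IsHEDCS, ht0] using by positivity
  have hd : 0 < d := (hE₀ e he).card_pos.trans_le (hE e he)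
  have hn0 : 0 < Fintype.card V := (hE₀ e he).card_pos.trans_le (card_le_univ e)
  obtain hn1 | hn2 : Fintype.card V = 1 ∨ 2 ≤ Fintype.card V := by lia
  · exact le_trans (by norm_num [hn1]) (sampleProb_nonneg hp0.le hp1)
  have hdβ : (d : ℝ) ≤ lam * β := natCast_le_mul_of_log_le hα2 hlam0 hlamα hn2 hβ
  have hβ0 : 0 < β := pos_of_mul_pos_right ((Nat.cast_pos.2 hd).trans_le hdβ) hlam0.le
  have hβH : (1 - lam / α) * β / p ≤ β / p := by
    gcongr
    exact mul_le_of_le_one_left hβ_nonneg (sub_le_self 1 (by positivity))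
  have hdeg (v : V) : p * deg H v ≤ β :=
    (le_div_iff₀' hp0).1 ((hH.mono hβH le_rfl).deg_le (by positivity) v)
  calc
    _ ≤ 1 - Fintype.card V * (2 * Real.exp (-(t ^ 2 / (3 * β)))) := by
      gcongr
      exact natCast_mul_two_mul_exp_neg_le hα hlam0 hd hn0.ne' hβ0 hβ
    _ ≤ sampleProb E p {S | ∀ v : V, |(deg (H ∩ S) v : ℝ) - p * deg H v| ≤ t} :=
      one_sub_le_sampleProb_abs_deg_inter_sub_le hH.1 hp0.le hp1 hdeg hβ0 ht0
        (by linarith [div_mul_natCast_mul_le hα hlamα hd hβ0.le])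
    _ ≤ _ := by
      refine sampleProb_mono hp0.le hp1 fun S hSE hdev => ⟨hdev, ?_⟩
      exact (hH.inter_of_abs_deg_inter_sub_le hE hSE hp0.le ht0 hdev).mono
        (mul_div_add_natCast_mul hd hp0).le (one_sub_mul_le_of_natCast_le_mul hd hp0 hpα hdβ)

/-- Robustness of HEDCS under edge sampling: if `H` is an
`HEDCS(G, β_H, β_H − (d−1))` with `β_H = (1 − λ/α)·β/p`,
`β ≥ 15d(αd)²·λ⁻²·log n` and `p < 1 − 2/α`, then for the edge sampled subgraph
`G_p` and `H_p = H ∩ G_p`, with probability at least `1 − 2/n^{5d−1}`: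
(1) `|d_{H_p}(v) − p·d_H(v)| ≤ (λ/(αd))·β` for every vertex `v`, and
(2) `H_p` is an `HEDCS(G_p, β, (1−λ)β)`. -/
theorem hedcs_sampling_robust {V : Type*} [Fintype V] [DecidableEq V]
    (d : ℕ) (hd : 2 ≤ d)
    (E : Finset (Finset V)) (hE : ∀ e ∈ E, e.card = d)
    (n : ℕ) (hn : n = Fintype.card V)
    (α lam p β : ℝ) (hα : 2 < α) (hlam0 : 0 < lam) (hlam1 : lam < 1)
    (hp0 : 0 < p) (hp1 : p < 1) (hpα : p < 1 - 2 / α)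
    (hβ : 15 * (d : ℝ) * (α * d) ^ 2 / lam ^ 2 * Real.log n ≤ β)
    (βH βHm : ℝ) (hβH : βH = (1 - lam / α) * β / p) (hβHm : βHm = βH - ((d : ℝ) - 1))
    (H : Finset (Finset V)) (hH : IsHEDCS E H βH βHm) :
    1 - 2 / (n : ℝ) ^ (5 * d - 1) ≤
      sampleProb E p {S |
        (∀ v : V, |((deg (H ∩ S) v : ℝ)) - p * (deg H v : ℝ)| ≤ lam / (α * d) * β) ∧
        IsHEDCS S (H ∩ S) β ((1 - lam) * β)} := by
  subst hn hβH hβHm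
  exact hedcs_sampling_robust_general d E (fun e he => card_pos.1 (by rw [hE e he]; lia))
    (fun e he => (hE e he).le) α lam p β (by linarith) hlam0 (by linarith) hp0 hpα.le hβ H hH
end

section
/- There is an absolute constant C > 0 with the following property. Let G = (V, E) be a d-uniform hypergraph on n vertices with d ≥ 2, let p ∈ (0, 1) and 0 < λ < 1, and suppose there exists a real α > 2/(1−p) such that β ≥ 15d(αd)²·λ^{−2}·log n. Let (G₁, G₂) be a pair of random subgraphs of G, defined on a common probability space with arbitrary joint distribution, such that marginally each G_i is an edge sampled subgraph of G with probability p. Let f₁, f₂ be arbitrary functions assigning to each possible subgraph of G an HEDCS of it with parameters (β, (1−λ)β), and set H₁ = f₁(G₁), H₂ = f₂(G₂). Then with probability at least 1 − 4/n^{5d−1}, simultaneously for every vertex v ∈ V, |d_{H₁}(v) − d_{H₂}(v)| ≤ C·n^{1/2}·λ^{1/2}·β. -/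
open Finset

/-!
Write `s` and `t` for the degree sums of an edge under `H₁` and `H₂`, so that
`∑ v, (d_{H₁}(v) - d_{H₂}(v))² = ∑ e ∈ H₁, (s e - t e) + ∑ e ∈ H₂, (t e - s e)`.
Let the excess of `e` be `s e - t e` (if positive) when `s e ≤ β` and `t e < (1 - λ) β`, and `0`
otherwise. On `H₁` the difference `s - t` is at most this excess, minus the excess with `s` and `t`
exchanged, plus a slack `λ β`; since `|H₁| ≤ n β`, the slack costs `λ n β²` in total. By (P2), edges
of `G₂` outside `H₂` have no excess and edges of `G₁` outside `H₁` have no exchanged excess, so both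
sums may be taken over `G₁` and `G₂` instead. The sum of squares is thus `O(λ n β²)` as soon as each
of the two excesses has about the same total over `G₁` as over `G₂`; any one vertex
then contributes at most the square root of this.

For a fixed pair of degree profiles the excess is a fixed weight on the edges, and its totals over
`G₁` and `G₂` agree up to `O(λ n β²)` by a Chernoff bound. The profiles of `H₁` and `H₂` depend on
the sample, but there are at most `(|E| + 1) ^ (2 n)` pairs of profiles, and a union bound over all
of them applies whatever the coupling of `G₁` and `G₂` is.
-/

open MeasureTheory

section Degrees

variable {V : Type*} [DecidableEq V] {E G H : Finset (Finset V)} {β βm : ℝ}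

lemma deg_le_card (hH : H ⊆ E) (v : V) : deg H v ≤ #E :=
  (card_filter_le _ _).trans (card_le_card hH)

lemma IsHEDCS.deg_le_s12 (h : IsHEDCS G H β βm) (hβ : 0 ≤ β) (v : V) : (deg H v : ℝ) ≤ β := by
  obtain hv | ⟨e, he⟩ := (H.filter (v ∈ ·)).eq_empty_or_nonempty
  · simpa [deg, hv] using hβ
  · obtain ⟨heH, hve⟩ := mem_filter.1 he
    exact (single_le_sum (f := fun u => (deg H u : ℝ)) (fun _ _ => Nat.cast_nonneg _) hve).trans
      (h.2.1 e heH)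

lemma sum_deg_mul [Fintype V] {R : Type*} [NonAssocSemiring R] (H : Finset (Finset V)) (f : V → R) :
    ∑ v, (deg H v : R) * f v = ∑ e ∈ H, ∑ v ∈ e, f v := by
  have hite : ∀ e ∈ H, ∑ v ∈ e, f v = ∑ v, if v ∈ e then f v else 0 := fun e _ => by simp
  rw [sum_congr rfl hite, sum_comm]
  refine sum_congr rfl fun v _ => ?_
  rw [← sum_filter, sum_const, nsmul_eq_mul, deg]

lemma IsHEDCS.card_le [Fintype V] (h : IsHEDCS G H β βm) (hβ : 0 ≤ β) (hG : ∀ e ∈ G, e.Nonempty) :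
    (#H : ℝ) ≤ Fintype.card V * β := by
  calc (#H : ℝ) = ∑ _e ∈ H, (1 : ℝ) := by simp
    _ ≤ ∑ e ∈ H, ∑ _v ∈ e, (1 : ℝ) := sum_le_sum fun e he => by
        simpa using (hG e (h.1 he)).card_pos
    _ = ∑ v, (deg H v : ℝ) * 1 := (sum_deg_mul H _).symm
    _ ≤ ∑ _v : V, β := sum_le_sum fun v _ => by simpa using h.deg_le_s12 hβ v
    _ = Fintype.card V * β := by simp

end Degrees

section Excess

variable {V : Type*}

/-- The degree sum `∑ v ∈ e, x v` of an edge `e` with respect to a *degree profile* `x`, that is, a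
function which is a candidate for the degree function of an unknown subgraph. -/
def degreeSum (x : V → ℕ) (e : Finset V) : ℝ := ∑ v ∈ e, (x v : ℝ)

/-- The amount by which the degree sum of `e` under `x` exceeds that under `y`, counted only for
those edges `e` that `x` allows inside an HEDCS and that `y` does not allow outside of one. -/
noncomputable def excess (lam β : ℝ) (x y : V → ℕ) (e : Finset V) : ℝ :=
  if degreeSum x e ≤ β ∧ degreeSum y e < (1 - lam) * β then
    max (degreeSum x e - degreeSum y e) 0 else 0

lemma degreeSum_nonneg (x : V → ℕ) (e : Finset V) : 0 ≤ degreeSum x e :=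
  sum_nonneg fun _ _ => Nat.cast_nonneg _

variable {lam β : ℝ} {x y : V → ℕ} {e : Finset V}

lemma excess_nonneg : 0 ≤ excess lam β x y e := by
  unfold excess
  split_ifs
  exacts [le_max_right _ _, le_rfl]

lemma excess_le (hβ : 0 ≤ β) : excess lam β x y e ≤ β := by
  unfold excess
  split_ifs with h
  exacts [max_le (by linarith [h.1, degreeSum_nonneg y e]) hβ, hβ]

lemma excess_eq_zero (h : (1 - lam) * β ≤ degreeSum y e) : excess lam β x y e = 0 :=
  if_neg fun hxy => hxy.2.not_ge h

lemma degreeSum_sub_le (hlam : 0 ≤ lam) (hβ : 0 ≤ β) (hx : degreeSum x e ≤ β) :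
    degreeSum x e - degreeSum y e ≤ excess lam β x y e - excess lam β y x e + lam * β := by
  have hslack : 0 ≤ lam * β := mul_nonneg hlam hβ
  unfold excess
  split_ifs <;> grind

end Excess

section Comparison

variable {V : Type*} [DecidableEq V] {E G H G₁ G₂ H₁ H₂ : Finset (Finset V)} {p lam β : ℝ}
  {x y : V → ℕ}

lemma IsHEDCS.sum_excess_eq (h : IsHEDCS G H β ((1 - lam) * β)) :
    ∑ e ∈ H, excess lam β x (deg H) e = ∑ e ∈ G, excess lam β x (deg H) e :=
  sum_subset h.1 fun e he heH => excess_eq_zero (h.2.2 e he heH)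

variable [Fintype V]

lemma IsHEDCS.sum_excess_le (h : IsHEDCS G H β ((1 - lam) * β)) (hβ : 0 ≤ β)
    (hG : ∀ e ∈ G, e.Nonempty) :
    ∑ e ∈ G, excess lam β x (deg H) e ≤ Fintype.card V * β ^ 2 := by
  calc ∑ e ∈ G, excess lam β x (deg H) e
      = ∑ e ∈ H, excess lam β x (deg H) e := h.sum_excess_eq.symm
    _ ≤ #H * β := by
        simpa using sum_le_card_nsmul H _ β fun e _ => excess_le hβ
    _ ≤ Fintype.card V * β * β := by gcongr; exact h.card_le hβ hG
    _ = Fintype.card V * β ^ 2 := by ring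

lemma IsHEDCS.sum_degreeSum_sub_le (h : IsHEDCS G H β ((1 - lam) * β)) (hlam : 0 ≤ lam)
    (hβ : 0 ≤ β) (hG : ∀ e ∈ G, e.Nonempty) :
    ∑ e ∈ H, (degreeSum (deg H) e - degreeSum y e) ≤
      ∑ e ∈ G, excess lam β (deg H) y e - ∑ e ∈ G, excess lam β y (deg H) e +
        lam * (Fintype.card V * β ^ 2) := by
  have hmono : ∑ e ∈ H, excess lam β (deg H) y e ≤ ∑ e ∈ G, excess lam β (deg H) y e :=
    sum_le_sum_of_subset_of_nonneg h.1 fun _ _ _ => excess_nonneg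
  have hslack : #H * (lam * β) ≤ lam * (Fintype.card V * β ^ 2) :=
    calc #H * (lam * β) ≤ Fintype.card V * β * (lam * β) := by gcongr; exact h.card_le hβ hG
      _ = lam * (Fintype.card V * β ^ 2) := by ring
  have hsum := sum_le_sum fun e he => degreeSum_sub_le (y := y) hlam hβ (h.2.1 e he)
  rw [sum_add_distrib, sum_sub_distrib (excess lam β (deg H) y), sum_const, nsmul_eq_mul,
    h.sum_excess_eq] at hsum
  linarith

lemma sum_sq_deg_sub_deg (H K : Finset (Finset V)) :
    ∑ v, ((deg H v : ℝ) - deg K v) ^ 2 =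
      ∑ e ∈ H, (degreeSum (deg H) e - degreeSum (deg K) e) +
        ∑ e ∈ K, (degreeSum (deg K) e - degreeSum (deg H) e) := by
  simp only [degreeSum, ← sum_sub_distrib, ← sum_deg_mul, ← sum_add_distrib]
  exact sum_congr rfl fun v _ => by ring

/-- A subgraph `S` of `E` is *typical* if, for all pairs of degree profiles of subgraphs of `E`, the
excess carried by `S` is close to `p` times that carried by `E`, which is its expectation when `S`
is an edge sample of `E`. -/
def IsTypical (E : Finset (Finset V)) (p lam β : ℝ) (S : Finset (Finset V)) : Prop :=
  ∀ x y : V → ℕ, (∀ v, x v ≤ #E) → (∀ v, y v ≤ #E) →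
    |∑ e ∈ S, excess lam β x y e - p * ∑ e ∈ E, excess lam β x y e| ≤
      lam / 2 * (p * ∑ e ∈ E, excess lam β x y e + Fintype.card V * β ^ 2)

lemma sub_le_of_abs_sub_le {ε μ T A B : ℝ} (hε : 0 ≤ ε) (hε' : ε ≤ 1 / 2) (hT : 0 ≤ T)
    (hA : |A - μ| ≤ ε * (μ + T)) (hB : |B - μ| ≤ ε * (μ + T)) (hBT : B ≤ T) :
    A - B ≤ 8 * ε * T := by
  rw [abs_le] at hA hB
  have hμ : μ ≤ 3 * T := by nlinarith
  calc A - B ≤ 2 * ε * (μ + T) := by linarith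
    _ ≤ 2 * ε * (3 * T + T) := by gcongr
    _ = 8 * ε * T := by ring

lemma IsTypical.sum_excess_sub_le (hG₁ : IsTypical E p lam β G₁) (hG₂ : IsTypical E p lam β G₂)
    (h₂ : IsHEDCS G₂ H₂ β ((1 - lam) * β)) (hG₂E : G₂ ⊆ E) (hE : ∀ e ∈ E, e.Nonempty)
    (hlam : 0 ≤ lam) (hlam' : lam ≤ 1) (hβ : 0 ≤ β) (hx : ∀ v, x v ≤ #E) :
    ∑ e ∈ G₁, excess lam β x (deg H₂) e - ∑ e ∈ G₂, excess lam β x (deg H₂) e ≤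
      4 * lam * (Fintype.card V * β ^ 2) := by
  have hy : ∀ v, deg H₂ v ≤ #E := deg_le_card (h₂.1.trans hG₂E)
  have hle := sub_le_of_abs_sub_le (by positivity) (by linarith) (by positivity)
    (hG₁ x _ hx hy) (hG₂ x _ hx hy) (h₂.sum_excess_le hβ fun e he => hE e (hG₂E he))
  linarith

theorem IsTypical.sum_sq_deg_sub_deg_le (hG₁ : IsTypical E p lam β G₁)
    (hG₂ : IsTypical E p lam β G₂) (hG₁E : G₁ ⊆ E) (hG₂E : G₂ ⊆ E)
    (h₁ : IsHEDCS G₁ H₁ β ((1 - lam) * β)) (h₂ : IsHEDCS G₂ H₂ β ((1 - lam) * β))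
    (hE : ∀ e ∈ E, e.Nonempty) (hlam : 0 ≤ lam) (hlam' : lam ≤ 1) (hβ : 0 ≤ β) :
    ∑ v, ((deg H₁ v : ℝ) - deg H₂ v) ^ 2 ≤ 10 * lam * (Fintype.card V * β ^ 2) := by
  have hsum₁ := h₁.sum_degreeSum_sub_le (y := deg H₂) hlam hβ fun e he => hE e (hG₁E he)
  have hsum₂ := h₂.sum_degreeSum_sub_le (y := deg H₁) hlam hβ fun e he => hE e (hG₂E he)
  have hdiff₁ := hG₁.sum_excess_sub_le hG₂ h₂ hG₂E hE hlam hlam' hβ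
    (deg_le_card (h₁.1.trans hG₁E))
  have hdiff₂ := hG₂.sum_excess_sub_le hG₁ h₁ hG₁E hE hlam hlam' hβ
    (deg_le_card (h₂.1.trans hG₂E))
  rw [sum_sq_deg_sub_deg]
  linarith

theorem IsTypical.abs_deg_sub_deg_le (hG₁ : IsTypical E p lam β G₁)
    (hG₂ : IsTypical E p lam β G₂) (hG₁E : G₁ ⊆ E) (hG₂E : G₂ ⊆ E)
    (h₁ : IsHEDCS G₁ H₁ β ((1 - lam) * β)) (h₂ : IsHEDCS G₂ H₂ β ((1 - lam) * β))
    (hE : ∀ e ∈ E, e.Nonempty) (hlam : 0 ≤ lam) (hlam' : lam ≤ 1) (hβ : 0 ≤ β) (v : V) :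
    |(deg H₁ v : ℝ) - deg H₂ v| ≤ 4 * √(Fintype.card V) * √lam * β := by
  refine abs_le_of_sq_le_sq ?_ (by positivity)
  calc ((deg H₁ v : ℝ) - deg H₂ v) ^ 2
      ≤ ∑ u, ((deg H₁ u : ℝ) - deg H₂ u) ^ 2 :=
        single_le_sum (f := fun u => ((deg H₁ u : ℝ) - deg H₂ u) ^ 2)
          (fun _ _ => sq_nonneg _) (mem_univ v)
    _ ≤ 10 * lam * (Fintype.card V * β ^ 2) :=
        hG₁.sum_sq_deg_sub_deg_le hG₂ hG₁E hG₂E h₁ h₂ hE hlam hlam' hβ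
    _ ≤ 16 * lam * (Fintype.card V * β ^ 2) := by gcongr; norm_num
    _ = (4 * √(Fintype.card V) * √lam * β) ^ 2 := by
        rw [mul_pow, mul_pow, mul_pow, Real.sq_sqrt (by positivity), Real.sq_sqrt hlam]; ring

end Comparison

section BinomialSubset

variable {ι : Type*} {E : Finset ι} {p : ℝ}

/-- The probability that a random subset of `E`, containing each element independently with
probability `p`, is equal to the subset `S` of `E`. -/
def binomialWeight (E : Finset ι) (p : ℝ) (S : Finset ι) : ℝ := p ^ #S * (1 - p) ^ (#E - #S)

open Classical in
/-- The probability that a random subset of `E`, containing each element independently with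
probability `p`, has the property `Q`. -/
noncomputable def binomialProb (E : Finset ι) (p : ℝ) (Q : Finset ι → Prop) : ℝ :=
  ∑ S ∈ E.powerset with Q S, binomialWeight E p S

lemma binomialWeight_nonneg (hp : 0 ≤ p) (hp' : p ≤ 1) (S : Finset ι) :
    0 ≤ binomialWeight E p S :=
  mul_nonneg (pow_nonneg hp _) (pow_nonneg (sub_nonneg.2 hp') _)

lemma sum_binomialWeight (E : Finset ι) (p : ℝ) : ∑ S ∈ E.powerset, binomialWeight E p S = 1 := by
  simp [binomialWeight, sum_pow_mul_eq_add_pow]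

lemma binomialProb_not (E : Finset ι) (p : ℝ) (Q : Finset ι → Prop) :
    binomialProb E p (fun S => ¬ Q S) = 1 - binomialProb E p Q := by
  classical
  rw [eq_sub_iff_add_eq', ← sum_binomialWeight E p,
    ← sum_filter_add_sum_filter_not E.powerset Q (binomialWeight E p)]
  unfold binomialProb
  congr!

lemma binomialProb_le_add (hp : 0 ≤ p) (hp' : p ≤ 1) {Q Q₁ Q₂ : Finset ι → Prop}
    (h : ∀ S, Q S → Q₁ S ∨ Q₂ S) :
    binomialProb E p Q ≤ binomialProb E p Q₁ + binomialProb E p Q₂ := by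
  simp only [binomialProb, sum_filter, ← sum_add_distrib]
  refine sum_le_sum fun S _ => ?_
  have := binomialWeight_nonneg (E := E) hp hp' S
  split_ifs <;> grind

lemma binomialProb_le_sum (hp : 0 ≤ p) (hp' : p ≤ 1) {κ : Type*} {I : Finset κ}
    {Q : Finset ι → Prop} {R : κ → Finset ι → Prop} (h : ∀ S, Q S → ∃ i ∈ I, R i S) :
    binomialProb E p Q ≤ ∑ i ∈ I, binomialProb E p (R i) := by
  classical
  simp only [binomialProb, sum_filter]
  rw [sum_comm]
  refine sum_le_sum fun S _ => ?_
  have hnonneg : ∀ i ∈ I, 0 ≤ if R i S then binomialWeight E p S else 0 := fun i _ =>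
    ite_nonneg (binomialWeight_nonneg hp hp' S) le_rfl
  split_ifs with hS
  · obtain ⟨i, hi, hiS⟩ := h S hS
    simpa [hiS] using single_le_sum hnonneg hi
  · exact sum_nonneg hnonneg

lemma sum_binomialWeight_mul_prod (E : Finset ι) (p : ℝ) (f : ι → ℝ) :
    ∑ S ∈ E.powerset, binomialWeight E p S * ∏ e ∈ S, f e = ∏ e ∈ E, (p * f e + (1 - p)) := by
  classical
  rw [prod_add]
  refine sum_congr rfl fun S hS => ?_
  rw [prod_mul_distrib, prod_const, prod_const, card_sdiff_of_subset (mem_powerset.1 hS),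
    binomialWeight]
  ring

lemma mul_exp_add_one_sub_le (hp : 0 ≤ p) {b : ℝ} (hb : |b| ≤ 1) :
    p * Real.exp b + (1 - p) ≤ Real.exp (p * (b + b ^ 2)) := by
  have hexp : Real.exp b ≤ 1 + b + b ^ 2 := by
    linarith [(abs_le.1 (Real.abs_exp_sub_one_sub_id_le hb)).2]
  calc p * Real.exp b + (1 - p) ≤ p * (1 + b + b ^ 2) + (1 - p) := by gcongr
    _ = p * (b + b ^ 2) + 1 := by ring
    _ ≤ Real.exp (p * (b + b ^ 2)) := Real.add_one_le_exp _

variable {a : ι → ℝ} {B t ε T : ℝ}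

lemma sum_binomialWeight_mul_exp_le (hp : 0 ≤ p) (hp' : p ≤ 1) (ha : ∀ e ∈ E, 0 ≤ a e)
    (ht : ∀ e ∈ E, |t| * a e ≤ ε) (hε : ε ≤ 1) :
    ∑ S ∈ E.powerset, binomialWeight E p S * Real.exp (t * ∑ e ∈ S, a e) ≤
      Real.exp ((t + |t| * ε) * (p * ∑ e ∈ E, a e)) := by
  have habs : ∀ e ∈ E, |t * a e| = |t| * a e := fun e he => by
    rw [abs_mul, abs_of_nonneg (ha e he)]
  have hterm : ∀ e ∈ E, p * (t * a e + (t * a e) ^ 2) ≤ (t + |t| * ε) * (p * a e) := by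
    intro e he
    have hae := ha e he
    calc p * (t * a e + (t * a e) ^ 2) = p * (t * a e + |t| * a e * (|t| * a e)) := by
          rw [← habs e he, abs_mul_abs_self, sq]
      _ ≤ p * (t * a e + |t| * a e * ε) := by gcongr; exact ht e he
      _ = (t + |t| * ε) * (p * a e) := by ring
  calc ∑ S ∈ E.powerset, binomialWeight E p S * Real.exp (t * ∑ e ∈ S, a e)
      = ∏ e ∈ E, (p * Real.exp (t * a e) + (1 - p)) := by
        simp only [mul_sum, Real.exp_sum, sum_binomialWeight_mul_prod]
    _ ≤ ∏ e ∈ E, Real.exp (p * (t * a e + (t * a e) ^ 2)) := prod_le_prod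
        (fun e _ => add_nonneg (mul_nonneg hp (Real.exp_pos _).le) (sub_nonneg.2 hp'))
        fun e he => mul_exp_add_one_sub_le hp ((habs e he).trans_le ((ht e he).trans hε))
    _ ≤ Real.exp ((t + |t| * ε) * (p * ∑ e ∈ E, a e)) := by
        rw [← Real.exp_sum, Real.exp_le_exp, mul_sum, mul_sum]
        exact sum_le_sum hterm

lemma binomialProb_le_mul_sum_le (hp : 0 ≤ p) (hp' : p ≤ 1) (ha : ∀ e ∈ E, 0 ≤ a e)
    (ht : ∀ e ∈ E, |t| * a e ≤ ε) (hε : ε ≤ 1) (c : ℝ) :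
    binomialProb E p (fun S => c ≤ t * ∑ e ∈ S, a e) ≤
      Real.exp ((t + |t| * ε) * (p * ∑ e ∈ E, a e) - c) := by
  classical
  have hmarkov : ∀ S, (if c ≤ t * ∑ e ∈ S, a e then binomialWeight E p S else 0) ≤
      binomialWeight E p S * Real.exp (t * ∑ e ∈ S, a e) * Real.exp (-c) := by
    intro S
    have hS := binomialWeight_nonneg (E := E) hp hp' S
    split_ifs with hc
    · rw [mul_assoc, ← Real.exp_add]
      exact le_mul_of_one_le_right hS (Real.one_le_exp (by linarith))
    · positivity
  calc binomialProb E p (fun S => c ≤ t * ∑ e ∈ S, a e)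
      = ∑ S ∈ E.powerset, if c ≤ t * ∑ e ∈ S, a e then binomialWeight E p S else 0 := by
        rw [binomialProb, sum_filter]
    _ ≤ (∑ S ∈ E.powerset, binomialWeight E p S * Real.exp (t * ∑ e ∈ S, a e)) *
          Real.exp (-c) := by
        rw [sum_mul]; exact sum_le_sum fun S _ => hmarkov S
    _ ≤ Real.exp ((t + |t| * ε) * (p * ∑ e ∈ E, a e)) * Real.exp (-c) := by
        gcongr; exact sum_binomialWeight_mul_exp_le hp hp' ha ht hε
    _ = Real.exp ((t + |t| * ε) * (p * ∑ e ∈ E, a e) - c) := by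
        rw [← Real.exp_add, sub_eq_add_neg]

theorem binomialProb_lt_abs_sum_sub_le (hp : 0 ≤ p) (hp' : p ≤ 1) (hB : 0 < B)
    (ha : ∀ e ∈ E, 0 ≤ a e) (haB : ∀ e ∈ E, a e ≤ B) (hε : 0 ≤ ε) (hε' : ε ≤ 1) (T : ℝ) :
    binomialProb E p (fun S =>
        ε * (p * ∑ e ∈ E, a e + T) < |∑ e ∈ S, a e - p * ∑ e ∈ E, a e|) ≤
      2 * Real.exp (-(ε ^ 2 * T / B)) := by
  set μ := p * ∑ e ∈ E, a e
  set t := ε / B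
  have ht : 0 ≤ t := div_nonneg hε hB.le
  have hta : ∀ e ∈ E, t * a e ≤ ε := fun e he =>
    (mul_le_mul_of_nonneg_left (haB e he) ht).trans_eq (div_mul_cancel₀ ε hB.ne')
  have hupper := binomialProb_le_mul_sum_le (t := t) hp hp' ha (by rwa [abs_of_nonneg ht]) hε'
    (t * (μ + ε * (μ + T)))
  have hlower := binomialProb_le_mul_sum_le (t := -t) hp hp' ha
    (by rwa [abs_neg, abs_of_nonneg ht]) hε' (-t * (μ - ε * (μ + T)))
  have hsplit := binomialProb_le_add (E := E) hp hp'
    (Q := fun S => ε * (μ + T) < |∑ e ∈ S, a e - μ|)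
    (Q₁ := fun S => t * (μ + ε * (μ + T)) ≤ t * ∑ e ∈ S, a e)
    (Q₂ := fun S => -t * (μ - ε * (μ + T)) ≤ -t * ∑ e ∈ S, a e) fun S hS => by
      rcases lt_abs.1 hS with h | h
      · exact .inl (mul_le_mul_of_nonneg_left (by linarith) ht)
      · exact .inr (mul_le_mul_of_nonpos_left (by linarith) (neg_nonpos.2 ht))
  have hexp_upper : (t + |t| * ε) * μ - t * (μ + ε * (μ + T)) = -(ε ^ 2 * T / B) := by
    rw [abs_of_nonneg ht]; ring
  have hexp_lower : (-t + |-t| * ε) * μ - -t * (μ - ε * (μ + T)) = -(ε ^ 2 * T / B) := by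
    rw [abs_neg, abs_of_nonneg ht]; ring
  rw [hexp_upper] at hupper
  rw [hexp_lower] at hlower
  linarith

end BinomialSubset

theorem binomialProb_not_isTypical_le {V : Type*} [Fintype V]
    (E : Finset (Finset V)) {p lam β : ℝ} (hp : 0 ≤ p) (hp' : p ≤ 1) (hlam : 0 ≤ lam)
    (hlam' : lam ≤ 2) (hβ : 0 < β) :
    binomialProb E p (fun S => ¬ IsTypical E p lam β S) ≤
      2 * ((#E + 1) ^ (2 * Fintype.card V) *
        Real.exp (-(lam ^ 2 * β * Fintype.card V / 4))) := by
  classical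
  set profiles : Finset (V → ℕ) := Fintype.piFinset fun _ => range (#E + 1)
  have hprofiles : #(profiles ×ˢ profiles) = (#E + 1) ^ (2 * Fintype.card V) := by
    simp [profiles, two_mul, pow_add]
  have hunion := binomialProb_le_sum (E := E) hp hp' (I := profiles ×ˢ profiles)
    (Q := fun S => ¬ IsTypical E p lam β S)
    (R := fun q S => lam / 2 * (p * ∑ e ∈ E, excess lam β q.1 q.2 e + Fintype.card V * β ^ 2) <
      |∑ e ∈ S, excess lam β q.1 q.2 e - p * ∑ e ∈ E, excess lam β q.1 q.2 e|) fun S hS => by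
        simp only [IsTypical, not_forall, not_le] at hS
        obtain ⟨x, y, hx, hy, hxy⟩ := hS
        exact ⟨(x, y), by simpa [profiles, Nat.lt_succ_iff] using ⟨hx, hy⟩, hxy⟩
  refine hunion.trans ((sum_le_card_nsmul _ _ _ fun q _ =>
    binomialProb_lt_abs_sum_sub_le hp hp' hβ (fun _ _ => excess_nonneg)
      (fun _ _ => excess_le hβ.le) (by positivity) (by linarith) _).trans_eq ?_)
  rw [hprofiles, nsmul_eq_mul]
  push_cast
  have hexponent : (lam / 2) ^ 2 * (Fintype.card V * β ^ 2) / β =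
      lam ^ 2 * β * Fintype.card V / 4 := by
    field_simp; ring
  rw [hexponent]
  ring

section ProbabilitySpace

variable {Ω : Type*} [MeasurableSpace Ω]

/-- `g` is a random subset of `E` containing each element independently with probability `p`. For
the edge set `E` of a hypergraph, `g` is an *edge sampled subgraph*. The law of `g` is prescribed
through its point masses. -/
structure IsBinomialSubset {ι : Type*} (P : Measure Ω) (E : Finset ι) (p : ℝ)
    (g : Ω → Finset ι) : Prop where
  measurableSet_fiber : ∀ S ⊆ E, MeasurableSet (g ⁻¹' {S})
  real_fiber : ∀ S ⊆ E, P.real (g ⁻¹' {S}) = binomialWeight E p S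

lemma IsBinomialSubset.real_not_subset_and {ι : Type*} {P : Measure Ω} [IsProbabilityMeasure P]
    {E : Finset ι} {p : ℝ} {g : Ω → Finset ι} (hg : IsBinomialSubset P E p g)
    (Q : Finset ι → Prop) :
    P.real {ω | ¬ (g ω ⊆ E ∧ Q (g ω))} = binomialProb E p fun S => ¬ Q S := by
  classical
  have hsubset : ∀ S ∈ E.powerset.filter Q, S ⊆ E := fun S hS =>
    mem_powerset.1 (mem_filter.1 hS).1
  have hpre : {ω | g ω ⊆ E ∧ Q (g ω)} = g ⁻¹' (E.powerset.filter Q) := by ext; simp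
  have hmeas : MeasurableSet (g ⁻¹' (E.powerset.filter Q)) := by
    rw [← Set.biUnion_preimage_singleton]
    exact Finset.measurableSet_biUnion _ fun S hS => hg.measurableSet_fiber S (hsubset S hS)
  rw [← Set.compl_ofPred, hpre, probReal_compl_eq_one_sub hmeas, binomialProb_not,
    ← sum_measureReal_preimage_singleton _ fun S hS => hg.measurableSet_fiber S (hsubset S hS),
    sum_congr rfl fun S hS => hg.real_fiber S (hsubset S hS), binomialProb]

variable {V : Type*} [Fintype V] [DecidableEq V] {P : Measure Ω} [IsProbabilityMeasure P]
  {E : Finset (Finset V)} {p lam β : ℝ} {g₁ g₂ H₁ H₂ : Ω → Finset (Finset V)}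

theorem one_sub_le_real_abs_deg_sub_deg_le (hE : ∀ e ∈ E, e.Nonempty) (hp : 0 ≤ p) (hp' : p ≤ 1)
    (hlam : 0 ≤ lam) (hlam' : lam ≤ 1) (hβ : 0 < β)
    (hg₁ : IsBinomialSubset P E p g₁) (hg₂ : IsBinomialSubset P E p g₂)
    (hH₁ : ∀ ω, g₁ ω ⊆ E → IsHEDCS (g₁ ω) (H₁ ω) β ((1 - lam) * β))
    (hH₂ : ∀ ω, g₂ ω ⊆ E → IsHEDCS (g₂ ω) (H₂ ω) β ((1 - lam) * β)) :
    1 - 4 * ((#E + 1) ^ (2 * Fintype.card V) *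
        Real.exp (-(lam ^ 2 * β * Fintype.card V / 4))) ≤
      P.real {ω | ∀ v, |(deg (H₁ ω) v : ℝ) - deg (H₂ ω) v| ≤
        4 * √(Fintype.card V) * √lam * β} := by
  set good := {ω | ∀ v, |(deg (H₁ ω) v : ℝ) - deg (H₂ ω) v| ≤ 4 * √(Fintype.card V) * √lam * β}
  set bad₁ := {ω | ¬ (g₁ ω ⊆ E ∧ IsTypical E p lam β (g₁ ω))} with hbad₁
  set bad₂ := {ω | ¬ (g₂ ω ⊆ E ∧ IsTypical E p lam β (g₂ ω))} with hbad₂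
  have hcover : Set.univ ⊆ good ∪ (bad₁ ∪ bad₂) := by
    intro ω _
    by_cases h₁ : ω ∈ bad₁
    · exact .inr (.inl h₁)
    by_cases h₂ : ω ∈ bad₂
    · exact .inr (.inr h₂)
    obtain ⟨hsub₁, htyp₁⟩ := not_not.1 h₁
    obtain ⟨hsub₂, htyp₂⟩ := not_not.1 h₂
    exact .inl fun v => htyp₁.abs_deg_sub_deg_le htyp₂ hsub₁ hsub₂ (hH₁ ω hsub₁) (hH₂ ω hsub₂)
      hE hlam hlam' hβ.le v
  have hone : 1 ≤ P.real good + (P.real bad₁ + P.real bad₂) := by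
    calc 1 = P.real Set.univ := probReal_univ.symm
      _ ≤ P.real (good ∪ (bad₁ ∪ bad₂)) := measureReal_mono hcover
      _ ≤ P.real good + P.real (bad₁ ∪ bad₂) := measureReal_union_le _ _
      _ ≤ P.real good + (P.real bad₁ + P.real bad₂) := by gcongr; exact measureReal_union_le _ _
  rw [hbad₁, hbad₂, hg₁.real_not_subset_and, hg₂.real_not_subset_and] at hone
  have htail := binomialProb_not_isTypical_le E hp hp' hlam (by linarith) hβ
  linarith

lemma pow_mul_exp_neg_le {n d m k : ℕ} {R : ℝ} (hn : 2 ≤ n) (hm : m ≤ n ^ d)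
    (hR : (2 * n * (d + 1) + k) * Real.log n ≤ R) :
    (m + 1) ^ (2 * n) * Real.exp (-R) ≤ 1 / (n : ℝ) ^ k := by
  have hm' : m + 1 ≤ n ^ (d + 1) := by
    have : 1 ≤ n ^ d := Nat.one_le_pow _ _ (by omega)
    rw [pow_succ]; nlinarith
  rw [Real.exp_neg, ← div_eq_mul_inv, div_le_div_iff₀ (Real.exp_pos R) (by positivity), one_mul]
  calc ((m : ℝ) + 1) ^ (2 * n) * (n : ℝ) ^ k
      ≤ ((n : ℝ) ^ (d + 1)) ^ (2 * n) * (n : ℝ) ^ k := by gcongr; exact_mod_cast hm'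
    _ = (n : ℝ) ^ (2 * n * (d + 1) + k) := by rw [← pow_mul, ← pow_add, mul_comm (d + 1)]
    _ = Real.exp ((2 * n * (d + 1) + k) * Real.log n) := by
        rw [mul_comm _ (Real.log n), ← Real.rpow_def_of_pos (by positivity),
          ← Real.rpow_natCast]
        push_cast; rfl
    _ ≤ Real.exp R := Real.exp_le_exp.2 hR

theorem hedcs_in_edge_sampled_subgraphs_general {d : ℕ} (hd : 1 ≤ d) (hE : ∀ e ∈ E, e.Nonempty)
    (hcard : #E ≤ Fintype.card V ^ d) (hp : 0 ≤ p) (hp' : p ≤ 1) (hlam : 0 < lam)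
    (hlam' : lam ≤ 1) (hβ : 24 * d / lam ^ 2 * Real.log (Fintype.card V) ≤ β)
    (hg₁ : IsBinomialSubset P E p g₁) (hg₂ : IsBinomialSubset P E p g₂)
    (hH₁ : ∀ ω, g₁ ω ⊆ E → IsHEDCS (g₁ ω) (H₁ ω) β ((1 - lam) * β))
    (hH₂ : ∀ ω, g₂ ω ⊆ E → IsHEDCS (g₂ ω) (H₂ ω) β ((1 - lam) * β)) :
    1 - 4 / (Fintype.card V : ℝ) ^ (5 * d - 1) ≤
      P.real {ω | ∀ v, |(deg (H₁ ω) v : ℝ) - deg (H₂ ω) v| ≤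
        4 * √(Fintype.card V) * √lam * β} := by
  rcases isEmpty_or_nonempty V with hV | hV
  · simp [show 5 * d - 1 ≠ 0 by omega]
  obtain hn | hn := (Nat.one_le_iff_ne_zero.2 Fintype.card_ne_zero : 1 ≤ Fintype.card V).eq_or_lt
  · refine le_trans ?_ measureReal_nonneg
    rw [← hn]
    norm_num
  have hn' : (2 : ℝ) ≤ Fintype.card V := mod_cast hn
  have hd' : (1 : ℝ) ≤ d := mod_cast hd
  have hlog : 0 < Real.log (Fintype.card V) := Real.log_pos (by linarith)
  have hβ0 : 0 < β := lt_of_lt_of_le (by positivity) hβ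
  have hmain := one_sub_le_real_abs_deg_sub_deg_le hE hp hp' hlam.le hlam' hβ0 hg₁ hg₂ hH₁ hH₂
  have hcount : (#E + 1) ^ (2 * Fintype.card V) *
      Real.exp (-(lam ^ 2 * β * Fintype.card V / 4)) ≤
      1 / (Fintype.card V : ℝ) ^ (5 * d - 1) := by
    refine pow_mul_exp_neg_le hn hcard ?_
    have hexponent :
        2 * (Fintype.card V : ℝ) * (d + 1) + (5 * d - 1 : ℕ) ≤ 6 * d * Fintype.card V := by
      rw [Nat.cast_sub (by omega)]
      push_cast
      nlinarith
    have hβ' : 24 * d * Real.log (Fintype.card V) ≤ lam ^ 2 * β := by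
      rwa [div_mul_eq_mul_div, div_le_iff₀' (by positivity)] at hβ
    calc (2 * (Fintype.card V : ℝ) * (d + 1) + (5 * d - 1 : ℕ)) * Real.log (Fintype.card V)
        ≤ 6 * d * Fintype.card V * Real.log (Fintype.card V) := by gcongr
      _ = 24 * d * Real.log (Fintype.card V) * Fintype.card V / 4 := by ring
      _ ≤ lam ^ 2 * β * Fintype.card V / 4 := by gcongr
  rw [div_eq_mul_one_div]
  linarith

end ProbabilitySpace

section WeightedSampleSpace

variable {Ω : Type*} [Fintype Ω] [MeasurableSpace Ω] [MeasurableSingletonClass Ω] {w : Ω → ℝ}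

lemma exists_isProbabilityMeasure_real_eq_sum_indicator (hw : ∀ ω, 0 ≤ w ω)
    (hsum : ∑ ω, w ω = 1) :
    ∃ P : Measure Ω, IsProbabilityMeasure P ∧ ∀ A : Set Ω, P.real A = ∑ ω, A.indicator w ω := by
  classical
  have hsum' : ∑ ω, ENNReal.ofReal (w ω) = 1 := by
    rw [← ENNReal.ofReal_sum_of_nonneg fun ω _ => hw ω, hsum, ENNReal.ofReal_one]
  refine ⟨(PMF.ofFintype _ hsum').toMeasure, inferInstance, fun A => ?_⟩
  rw [measureReal_def, PMF.toMeasure_apply_fintype, ENNReal.toReal_sum fun ω _ => ?_]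
  · refine sum_congr rfl fun ω _ => ?_
    by_cases hω : ω ∈ A <;> simp [hω, hw ω]
  · by_cases hω : ω ∈ A <;> simp [hω]

lemma isBinomialSubset_of_sum_filter {ι : Type*} [DecidableEq ι] {E : Finset ι} {p : ℝ}
    {g : Ω → Finset ι} {P : Measure Ω} (hP : ∀ A : Set Ω, P.real A = ∑ ω, A.indicator w ω)
    (hg : ∀ S ∈ E.powerset, ∑ ω with g ω = S, w ω = p ^ #S * (1 - p) ^ (#E - #S)) :
    IsBinomialSubset P E p g where
  measurableSet_fiber _ _ := (Set.toFinite _).measurableSet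
  real_fiber S hS := by
    rw [binomialWeight, ← hg S (mem_powerset.2 hS), hP, sum_filter]
    refine sum_congr rfl fun ω _ => ?_
    by_cases hω : g ω = S <;> simp [hω]

end WeightedSampleSpace

lemma card_le_pow_of_forall_card_eq {V : Type*} [Fintype V] {E : Finset (Finset V)} {d : ℕ}
    (hE : ∀ e ∈ E, #e = d) : #E ≤ Fintype.card V ^ d :=
  (Set.Sized.card_le hE).trans (Nat.choose_le_pow _ _)

lemma mul_div_sq_mul_log_le {n d : ℕ} {p lam α : ℝ} (hd : 2 ≤ d) (hp : 0 ≤ p) (hp' : p < 1)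
    (hα : 2 / (1 - p) < α) :
    24 * d / lam ^ 2 * Real.log n ≤ 15 * d * (α * d) ^ 2 / lam ^ 2 * Real.log n := by
  have hd' : (2 : ℝ) ≤ d := mod_cast hd
  have hα' : 2 ≤ α := (le_div_self zero_le_two (by linarith) (by linarith)).trans hα.le
  have hsq : (2 * 2) ^ 2 ≤ (α * d) ^ 2 := by gcongr
  have hle : 24 * (d : ℝ) ≤ 15 * d * (α * d) ^ 2 := by nlinarith
  exact mul_le_mul_of_nonneg_right (div_le_div_of_nonneg_right hle (sq_nonneg lam))
    (Real.log_natCast_nonneg n)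

/-- HEDCS in edge sampled subgraphs: there is an absolute constant `C > 0` such
that for a pair `(G₁, G₂)` of (arbitrarily correlated) edge sampled subgraphs of
`G` with probability `p`, and arbitrary HEDCS `H₁ = f₁(G₁)`, `H₂ = f₂(G₂)` with
parameters `(β, (1−λ)β)` where `β ≥ 15d(αd)²·λ⁻²·log n` for some `α > 2/(1−p)`,
with probability at least `1 − 4/n^{5d−1}` every vertex `v` satisfies
`|d_{H₁}(v) − d_{H₂}(v)| ≤ C·n^{1/2}·λ^{1/2}·β`. The common probability space is
modelled by a finite sample space `Ω` with weights `w` summing to 1 and maps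
`g₁, g₂ : Ω → Finset (Finset V)` whose marginals are Bernoulli-`p` product
measures on subsets of `E`. -/
theorem hedcs_in_edge_sampled_subgraphs :
    ∃ C : ℝ, 0 < C ∧
      ∀ (V : Type) [Fintype V] [DecidableEq V],
      ∀ d : ℕ, 2 ≤ d →
      ∀ E : Finset (Finset V), (∀ e ∈ E, e.card = d) →
      ∀ n : ℕ, n = Fintype.card V →
      ∀ p lam β α : ℝ, 0 < p → p < 1 → 0 < lam → lam < 1 →
        2 / (1 - p) < α →
        15 * (d : ℝ) * (α * d) ^ 2 / lam ^ 2 * Real.log n ≤ β →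
      ∀ (Ω : Type) [Fintype Ω],
      ∀ (w : Ω → ℝ) (g₁ g₂ : Ω → Finset (Finset V)),
        (∀ ω, 0 ≤ w ω) → (∑ ω, w ω) = 1 →
        (∀ S ∈ E.powerset,
          ∑ ω ∈ Finset.univ.filter (fun ω => g₁ ω = S), w ω
            = p ^ S.card * (1 - p) ^ (E.card - S.card)) →
        (∀ S ∈ E.powerset,
          ∑ ω ∈ Finset.univ.filter (fun ω => g₂ ω = S), w ω
            = p ^ S.card * (1 - p) ^ (E.card - S.card)) →
      ∀ (f₁ f₂ : Finset (Finset V) → Finset (Finset V)),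
        (∀ S ⊆ E, IsHEDCS S (f₁ S) β ((1 - lam) * β)) →
        (∀ S ⊆ E, IsHEDCS S (f₂ S) β ((1 - lam) * β)) →
        1 - 4 / (n : ℝ) ^ (5 * d - 1) ≤
          ∑ ω, Set.indicator
            {ω : Ω | ∀ v : V,
              |((deg (f₁ (g₁ ω)) v : ℝ)) - (deg (f₂ (g₂ ω)) v : ℝ)|
                ≤ C * Real.sqrt n * Real.sqrt lam * β} w ω := by
  refine ⟨4, by norm_num, ?_⟩
  rintro V _ _ d hd E hE _ rfl p lam β α hp hp' hlam hlam' hα hβ Ω _ w g₁ g₂ hw hsum hg₁ hg₂ f₁ f₂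
    hf₁ hf₂
  let _ : MeasurableSpace Ω := ⊤
  obtain ⟨P, _, hP⟩ := exists_isProbabilityMeasure_real_eq_sum_indicator hw hsum
  rw [← hP]
  exact hedcs_in_edge_sampled_subgraphs_general (by omega)
    (fun e he => card_pos.1 (by have := hE e he; omega)) (card_le_pow_of_forall_card_eq hE)
    hp.le hp'.le hlam hlam'.le ((mul_div_sq_mul_log_le hd hp.le hp' hα).trans hβ)
    (isBinomialSubset_of_sum_filter hP hg₁) (isBinomialSubset_of_sum_filter hP hg₂)
    (fun ω => hf₁ (g₁ ω)) (fun ω => hf₂ (g₂ ω))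
end
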